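/- For every set Γ of propositional formulas and every propositional formula A: Γ ⊢_IPC A if and only if Γ^b ⊢_S4 A^b. -/

import Mathlib

/-! ### Modal formulas -/

inductive MF : Type
  | atom : ℕ → MF
  | bot  : MF
  | and  : MF → MF → MF
  | or   : MF → MF → MF
  | imp  : MF → MF → MF
  | neg  : MF → MF
  | box  : MF → MF
  deriving DecidableEq

namespace MF

/-- The set of atoms occurring in a modal formula. -/
def atoms : MF → Set ℕ
  | atom n => {n}
  | bot => ∅
  | and A B => atoms A ∪ atoms B
  | or A B => atoms A ∪ atoms B
  | imp A B => atoms A ∪ atoms B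
  | neg A => atoms A
  | box A => atoms A

/-- A boolean valuation on modal formulas respecting the classical connectives
(boxed formulas and atoms are treated as arbitrary). -/
def Respects (v : MF → Bool) : Prop :=
  v bot = false ∧
  (∀ A B, v (and A B) = (v A && v B)) ∧
  (∀ A B, v (or A B) = (v A || v B)) ∧
  (∀ A B, v (imp A B) = (!(v A) || v B)) ∧
  (∀ A, v (neg A) = !(v A))

/-- Classical propositional tautology (in the modal language). -/
def IsTaut (A : MF) : Prop := ∀ v, Respects v → v A = true

end MF

/-- Hilbert-style provability in the normal modal logic `K` extended by the
axiom scheme `Ax`: classical tautologies, scheme K, the extra axioms,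
modus ponens and necessitation. -/
inductive Prv (Ax : MF → Prop) : MF → Prop
  | taut {A : MF} : MF.IsTaut A → Prv Ax A
  | axK {A B : MF} : Prv Ax ((MF.box (A.imp B)).imp ((MF.box A).imp (MF.box B)))
  | extra {A : MF} : Ax A → Prv Ax A
  | mp {A B : MF} : Prv Ax (A.imp B) → Prv Ax A → Prv Ax B
  | nec {A : MF} : Prv Ax A → Prv Ax A.box

/-- Scheme 4 : □A → □□A. -/
def Ax4 (A : MF) : Prop := ∃ B, A = (MF.box B).imp (MF.box (MF.box B))
/-- Scheme T : □A → A. -/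
def AxT (A : MF) : Prop := ∃ B, A = (MF.box B).imp B
/-- Scheme D : ¬□⊥. -/
def AxD (A : MF) : Prop := A = MF.neg (MF.box MF.bot)
/-- Löb's scheme L : □(□A→A) → □A. -/
def AxGL (A : MF) : Prop := ∃ B, A = (MF.box ((MF.box B).imp B)).imp (MF.box B)

def AxK4  : MF → Prop := Ax4
def AxKD4 : MF → Prop := fun A => Ax4 A ∨ AxD A
def AxS4  : MF → Prop := fun A => Ax4 A ∨ AxT A

def PrvK   : MF → Prop := Prv (fun _ => False)
def PrvK4  : MF → Prop := Prv AxK4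
def PrvKD4 : MF → Prop := Prv AxKD4
def PrvS4  : MF → Prop := Prv AxS4
def PrvGL  : MF → Prop := Prv AxGL

/-- Conjunction of a finite list of modal formulas (empty conjunction is ⊤ := ⊥→⊥). -/
def conjL (l : List MF) : MF := l.foldr MF.and (MF.imp MF.bot MF.bot)

/-- `ModalConseq Ax Γ A` : there are B₁,…,Bₙ ∈ Γ with ⊢ (B₁∧…∧Bₙ)→A in K + Ax. -/
def ModalConseq (Ax : MF → Prop) (Γ : Set MF) (A : MF) : Prop :=
  ∃ l : List MF, (∀ B ∈ l, B ∈ Γ) ∧ Prv Ax ((conjL l).imp A)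

/-! ### Annotated modal formulas and translations -/

/-- Modal formulas with every occurrence of □ annotated by a natural number. -/
inductive AMF : Type
  | atom : ℕ → AMF
  | bot  : AMF
  | and  : AMF → AMF → AMF
  | or   : AMF → AMF → AMF
  | imp  : AMF → AMF → AMF
  | neg  : AMF → AMF
  | box  : ℕ → AMF → AMF

namespace AMF

/-- Forget the annotations. -/
def erase : AMF → MF
  | atom n => .atom n
  | bot => .bot
  | and A B => .and (erase A) (erase B)
  | or A B => .or (erase A) (erase B)
  | imp A B => .imp (erase A) (erase B)
  | neg A => .neg (erase A)
  | box _ A => .box (erase A)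

/-- The list of all annotations occurring in an annotated formula. -/
def labels : AMF → List ℕ
  | atom _ => []
  | bot => []
  | and A B => labels A ++ labels B
  | or A B => labels A ++ labels B
  | imp A B => labels A ++ labels B
  | neg A => labels A
  | box n A => n :: labels A

/-- A translation is ordered when the number assigned to each box is strictly
greater than all numbers assigned to boxes in its scope. -/
def Ordered : AMF → Prop
  | atom _ => True
  | bot => True
  | and A B => Ordered A ∧ Ordered B
  | or A B => Ordered A ∧ Ordered B
  | imp A B => Ordered A ∧ Ordered B
  | neg A => Ordered A
  | box n A => Ordered A ∧ ∀ m ∈ labels A, m < n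

end AMF

/-- `conjQ q n` is the conjunction q₀ ∧ … ∧ q_n of the atoms `q i`. -/
def conjQ (q : ℕ → ℕ) : ℕ → MF
  | 0 => .atom (q 0)
  | n+1 => (conjQ q n).and (.atom (q (n+1)))

/-- The formula `A^t`: commutes with connectives and `(□B)^t = □(q₀∧…∧q_n → B^t)`
where `n` is the annotation on that box. -/
def AMF.trans (q : ℕ → ℕ) : AMF → MF
  | .atom n => .atom n
  | .bot => .bot
  | .and A B => (trans q A).and (trans q B)
  | .or A B => (trans q A).or (trans q B)
  | .imp A B => (trans q A).imp (trans q B)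
  | .neg A => (trans q A).neg
  | .box n A => .box ((conjQ q n).imp (trans q A))

/-! ### Kripke semantics -/

/-- Classical Kripke forcing for modal formulas. -/
def Forces {W : Type} (R : W → W → Prop) (V : ℕ → W → Prop) : W → MF → Prop
  | w, .atom n => V n w
  | _, .bot => False
  | w, .and A B => Forces R V w A ∧ Forces R V w B
  | w, .or A B => Forces R V w A ∨ Forces R V w B
  | w, .imp A B => Forces R V w A → Forces R V w B
  | w, .neg A => ¬ Forces R V w A
  | w, .box A => ∀ u, R w u → Forces R V u A

/-- Cluster equivalence: `x = y`, or `x R y` and `y R x`. -/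
def ClusterEq {W : Type} (R : W → W → Prop) (x y : W) : Prop :=
  x = y ∨ (R x y ∧ R y x)

/-- A transitive frame whose clusters form a tree and in which every cluster is
a single irreflexive point or a nonempty set of reflexive points. -/
structure TreeWithClusters {W : Type} (R : W → W → Prop) : Prop where
  trans : Transitive R
  rooted : ∃ r, ∀ x, ClusterEq R r x ∨ R r x
  treelike : ∀ x y z, R x z → R y z → (ClusterEq R x y ∨ R x y ∨ R y x)
  cluster_irrefl_singleton : ∀ x, ¬ R x x → ∀ y, ClusterEq R x y → y = x
  cluster_homog : ∀ x y, ClusterEq R x y → (R x x → R y y)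

/-! ### Expansions -/

/-- `Expansion A B` : `B ∈ E(A)`, the set of expansions of `A`. -/
inductive Expansion : MF → MF → Prop
  | atom (n) : Expansion (.atom n) (.atom n)
  | bot : Expansion .bot .bot
  | and {A B D E : MF} : Expansion A D → Expansion B E → Expansion (A.and B) (D.and E)
  | or {A B D E : MF} : Expansion A D → Expansion B E → Expansion (A.or B) (D.or E)
  | imp {A B D E : MF} : Expansion A D → Expansion B E → Expansion (A.imp B) (D.imp E)
  | neg {A D : MF} : Expansion A D → Expansion A.neg D.neg
  | box {A D : MF} (l : List MF) : Expansion A D → (∀ E ∈ l, Expansion A E) →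
      Expansion A.box (MF.box (l.foldr MF.or D))

/-! ### Propositional formulas and Visser-style natural deduction -/

inductive PF : Type
  | atom : ℕ → PF
  | bot  : PF
  | and  : PF → PF → PF
  | or   : PF → PF → PF
  | imp  : PF → PF → PF
  deriving DecidableEq

def PF.top : PF := .imp .bot .bot
def PF.neg (A : PF) : PF := A.imp .bot

/-- Natural deduction derivability from a set of assumptions.  `ef` switches
the ex falso rule on/off; `Rule` is an additional rule given as a relation
between a list of premises and a conclusion.  The base system (with `ef`
and no extra rule) is Visser's BPC: ∧/∨ intro and elim, →I (discharging),
ex falso, and the formalized rules; no modus ponens. -/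
inductive Deriv (ef : Prop) (Rule : List PF → PF → Prop) : Set PF → PF → Prop
  | hyp {Γ : Set PF} {A : PF} : A ∈ Γ → Deriv ef Rule Γ A
  | andI {Γ : Set PF} {A B : PF} : Deriv ef Rule Γ A → Deriv ef Rule Γ B → Deriv ef Rule Γ (A.and B)
  | andE1 {Γ : Set PF} {A B : PF} : Deriv ef Rule Γ (A.and B) → Deriv ef Rule Γ A
  | andE2 {Γ : Set PF} {A B : PF} : Deriv ef Rule Γ (A.and B) → Deriv ef Rule Γ B
  | orI1 {Γ : Set PF} {A B : PF} : Deriv ef Rule Γ A → Deriv ef Rule Γ (A.or B)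
  | orI2 {Γ : Set PF} {A B : PF} : Deriv ef Rule Γ B → Deriv ef Rule Γ (A.or B)
  | orE {Γ : Set PF} {A B C : PF} : Deriv ef Rule Γ (A.or B) → Deriv ef Rule (insert A Γ) C →
      Deriv ef Rule (insert B Γ) C → Deriv ef Rule Γ C
  | impI {Γ : Set PF} {A B : PF} : Deriv ef Rule (insert A Γ) B → Deriv ef Rule Γ (A.imp B)
  | exfalso {Γ : Set PF} {A : PF} : ef → Deriv ef Rule Γ .bot → Deriv ef Rule Γ A
  | fAndI {Γ : Set PF} {A B C : PF} : Deriv ef Rule Γ (A.imp B) → Deriv ef Rule Γ (A.imp C) →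
      Deriv ef Rule Γ (A.imp (B.and C))
  | fOrE {Γ : Set PF} {A B C : PF} : Deriv ef Rule Γ (A.imp C) → Deriv ef Rule Γ (B.imp C) →
      Deriv ef Rule Γ ((A.or B).imp C)
  | fTr {Γ : Set PF} {A B C : PF} : Deriv ef Rule Γ (A.imp B) → Deriv ef Rule Γ (B.imp C) →
      Deriv ef Rule Γ (A.imp C)
  | extra {Γ : Set PF} {ps : List PF} {c : PF} : Rule ps c → (∀ p ∈ ps, Deriv ef Rule Γ p) → Deriv ef Rule Γ c

/-- No extra rule. -/
def RuleNone : List PF → PF → Prop := fun _ _ => False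
/-- Rule C : from A and ¬A infer ⊥. -/
def RuleC : List PF → PF → Prop := fun ps c => ∃ A : PF, ps = [A, A.neg] ∧ c = .bot
/-- Rule R (modus ponens) : from A and A→B infer B. -/
def RuleR : List PF → PF → Prop := fun ps c => ∃ A B : PF, ps = [A, A.imp B] ∧ c = B
/-- Löb's rule L : from (A∧(A→B))→B infer A→B. -/
def RuleL : List PF → PF → Prop :=
  fun ps c => ∃ A B : PF, ps = [(A.and (A.imp B)).imp B] ∧ c = A.imp B
/-- Rule C' : from ⊤→⊥ infer ⊥. -/
def RuleC' : List PF → PF → Prop := fun ps c => ps = [PF.top.imp .bot] ∧ c = .bot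
/-- Rule R' : from ⊤→A infer A. -/
def RuleR' : List PF → PF → Prop := fun ps c => ∃ A : PF, ps = [PF.top.imp A] ∧ c = A
/-- Rule L' : from (⊤→A)→A infer ⊤→A. -/
def RuleL' : List PF → PF → Prop :=
  fun ps c => ∃ A : PF, ps = [(PF.top.imp A).imp A] ∧ c = PF.top.imp A

def BPC  : Set PF → PF → Prop := Deriv True RuleNone
def EBPC : Set PF → PF → Prop := Deriv True RuleC
def IPC  : Set PF → PF → Prop := Deriv True RuleR
def FPL  : Set PF → PF → Prop := Deriv True RuleL
def MPC  : Set PF → PF → Prop := Deriv False RuleR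

/-! ### BHK translations -/

/-- The BHK translation `b`. -/
def bhk : PF → MF
  | .atom n => .box (.atom n)
  | .bot => .box .bot
  | .and A B => (bhk A).and (bhk B)
  | .or A B => (bhk A).or (bhk B)
  | .imp A B => .box ((bhk A).imp (bhk B))

/-- The weak BHK translation `w`.  The propositional atom `n` is embedded as
the modal atom `n+1`, and the fresh atom `q` (not in the propositional
language) is the modal atom `0`; `⊥^w = □q`. -/
def wtr : PF → MF
  | .atom n => .box (.atom (n+1))
  | .bot => .box (.atom 0)
  | .and A B => (wtr A).and (wtr B)
  | .or A B => (wtr A).or (wtr B)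
  | .imp A B => .box ((wtr A).imp (wtr B))

/-! ### The cut-free sequent calculus G(KD4) -/

/-- Cut-free derivability in the sequent calculus G(KD4): axioms,
structural rules (weakening, contraction, exchange), two-sided rules for
∧, ∨, →, ¬, and the modal rules □₄R and □_D R. -/
inductive GKD4 : List MF → List MF → Prop
  | ax (A) : GKD4 [A] [A]
  | axBot : GKD4 [.bot] []
  | exL {Γ Γ' Δ : List MF} : GKD4 Γ Δ → Γ.Perm Γ' → GKD4 Γ' Δ
  | exR {Γ Δ Δ' : List MF} : GKD4 Γ Δ → Δ.Perm Δ' → GKD4 Γ Δ'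
  | wL {Γ Δ : List MF} (A : MF) : GKD4 Γ Δ → GKD4 (A :: Γ) Δ
  | wR {Γ Δ : List MF} (A : MF) : GKD4 Γ Δ → GKD4 Γ (A :: Δ)
  | cL {Γ Δ : List MF} {A : MF} : GKD4 (A :: A :: Γ) Δ → GKD4 (A :: Γ) Δ
  | cR {Γ Δ : List MF} {A : MF} : GKD4 Γ (A :: A :: Δ) → GKD4 Γ (A :: Δ)
  | andL1 {Γ Δ : List MF} {A B : MF} : GKD4 (A :: Γ) Δ → GKD4 (A.and B :: Γ) Δ
  | andL2 {Γ Δ : List MF} {A B : MF} : GKD4 (B :: Γ) Δ → GKD4 (A.and B :: Γ) Δ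
  | andR {Γ₀ Δ₀ Γ₁ Δ₁ : List MF} {A B : MF} : GKD4 Γ₀ (A :: Δ₀) → GKD4 Γ₁ (B :: Δ₁) →
      GKD4 (Γ₀ ++ Γ₁) (A.and B :: (Δ₀ ++ Δ₁))
  | orL {Γ₀ Δ₀ Γ₁ Δ₁ : List MF} {A B : MF} : GKD4 (A :: Γ₀) Δ₀ → GKD4 (B :: Γ₁) Δ₁ →
      GKD4 (A.or B :: (Γ₀ ++ Γ₁)) (Δ₀ ++ Δ₁)
  | orR1 {Γ Δ : List MF} {A B : MF} : GKD4 Γ (A :: Δ) → GKD4 Γ (A.or B :: Δ)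
  | orR2 {Γ Δ : List MF} {A B : MF} : GKD4 Γ (B :: Δ) → GKD4 Γ (A.or B :: Δ)
  | impL {Γ₀ Δ₀ Γ₁ Δ₁ : List MF} {A B : MF} : GKD4 Γ₀ (A :: Δ₀) → GKD4 (B :: Γ₁) Δ₁ →
      GKD4 (A.imp B :: (Γ₀ ++ Γ₁)) (Δ₀ ++ Δ₁)
  | impR {Γ Δ : List MF} {A B : MF} : GKD4 (A :: Γ) (B :: Δ) → GKD4 Γ (A.imp B :: Δ)
  | negL {Γ Δ : List MF} {A : MF} : GKD4 Γ (A :: Δ) → GKD4 (A.neg :: Γ) Δ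
  | negR {Γ Δ : List MF} {A : MF} : GKD4 (A :: Γ) Δ → GKD4 Γ (A.neg :: Δ)
  | box4R {Γ : List MF} {A : MF} : GKD4 (Γ ++ Γ.map MF.box) [A] → GKD4 (Γ.map MF.box) [MF.box A]
  | boxDR {Γ : List MF} : GKD4 (Γ ++ Γ.map MF.box) [] → GKD4 (Γ.map MF.box) []

/-- Disjunction of a finite list of propositional formulas (empty: ⊥). -/
def disjL : List PF → PF
  | [] => .bot
  | [A] => A
  | A :: B :: r => A.or (disjL (B :: r))

/-! ### Kripke semantics for MPC -/

/-- Intuitionistic (minimal) forcing, where `⊥` has its own upward-closed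
valuation `Vbot`. -/
def MForces {W : Type} (le : W → W → Prop) (V : ℕ → W → Prop) (Vbot : W → Prop) :
    W → PF → Prop
  | w, .atom n => V n w
  | w, .bot => Vbot w
  | w, .and A B => MForces le V Vbot w A ∧ MForces le V Vbot w B
  | w, .or A B => MForces le V Vbot w A ∨ MForces le V Vbot w B
  | w, .imp A B => ∀ u, le w u → MForces le V Vbot u A → MForces le V Vbot u B

/-- The S4 valuation induced by an MPC valuation: the fresh atom `q` (modal
atom 0) gets `V(⊥)`, and the propositional atom `n` (modal atom `n+1`) gets `V(n)`. -/
def shiftVal {W : Type} (V : ℕ → W → Prop) (Vbot : W → Prop) : ℕ → W → Prop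
  | 0 => Vbot
  | n+1 => V n

/-! ### Modal derivability from assumptions -/

inductive MD (Γ : Set MF) : MF → Prop
  | hyp {A : MF} : A ∈ Γ → MD Γ A
  | thm {A : MF} : Prv AxS4 A → MD Γ A
  | mp {A B : MF} : MD Γ (A.imp B) → MD Γ A → MD Γ B

theorem resp_conjL {v : MF → Bool} (hv : MF.Respects v) (l : List MF) :
    v (conjL l) = true ↔ ∀ B ∈ l, v B = true := by
  obtain ⟨h1, h2, h3, h4, h5⟩ := hv
  induction l with
  | nil => simp [conjL, h4, h1]
  | cons a t ih =>
    have : conjL (a :: t) = a.and (conjL t) := rfl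
    rw [this, h2, Bool.and_eq_true, ih]
    simp

theorem MD.toConseq {Γ : Set MF} {A : MF} (h : MD Γ A) : ModalConseq AxS4 Γ A := by
  induction h with
  | @hyp A hA =>
    refine ⟨[A], by simpa using hA, .taut ?_⟩
    intro v hv
    have h := resp_conjL hv [A]
    obtain ⟨h1, h2, h3, h4, h5⟩ := hv
    rw [h4]
    cases hh : v (conjL [A]) <;> simp_all
  | @thm A hA =>
    refine ⟨[], by simp, .mp (.taut ?_) hA⟩
    intro v hv
    obtain ⟨h1, h2, h3, h4, h5⟩ := hv
    rw [h4, h4]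
    cases v A <;> simp
  | @mp A B _ _ ih1 ih2 =>
    obtain ⟨l1, m1, p1⟩ := ih1
    obtain ⟨l2, m2, p2⟩ := ih2
    refine ⟨l1 ++ l2, ?_, .mp (.mp (.taut ?_) p1) p2⟩
    · intro B hB
      rcases List.mem_append.1 hB with h | h
      · exact m1 _ h
      · exact m2 _ h
    · intro v hv
      have e1 := resp_conjL hv l1
      have e2 := resp_conjL hv l2
      have e3 := resp_conjL hv (l1 ++ l2)
      have e4 : v (conjL (l1 ++ l2)) = (v (conjL l1) && v (conjL l2)) := by
        rw [Bool.eq_iff_iff, Bool.and_eq_true, e1, e2, e3]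
        constructor
        · intro h
          exact ⟨fun B hB => h B (List.mem_append_left _ hB),
            fun B hB => h B (List.mem_append_right _ hB)⟩
        · rintro ⟨ha, hb⟩ B hB
          rcases List.mem_append.1 hB with h | h
          · exact ha _ h
          · exact hb _ h
      obtain ⟨h1, h2, h3, h4, h5⟩ := hv
      simp only [h4, e4]
      cases v (conjL l1) <;> cases v (conjL l2) <;> cases v A <;> cases v B <;> rfl

theorem MD.ded {Γ : Set MF} {A B : MF} (h : MD (insert A Γ) B) : MD Γ (A.imp B) := by
  induction h with
  | @hyp C hC =>
    rcases hC with rfl | hC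
    · refine .thm (.taut ?_)
      rintro v ⟨h1, h2, h3, h4, h5⟩
      rw [h4]; cases v C <;> rfl
    · refine .mp (.thm (.taut ?_)) (.hyp hC)
      rintro v ⟨h1, h2, h3, h4, h5⟩
      rw [h4, h4]; cases v C <;> cases v A <;> rfl
  | @thm C hC =>
    refine .mp (.thm (.taut ?_)) (.thm hC)
    rintro v ⟨h1, h2, h3, h4, h5⟩
    rw [h4, h4]; cases v C <;> cases v A <;> rfl
  | @mp C D _ _ ih1 ih2 =>
    refine .mp (.mp (.thm (.taut ?_)) ih1) ih2
    rintro v ⟨h1, h2, h3, h4, h5⟩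
    simp only [h4]; cases v C <;> cases v D <;> cases v A <;> rfl

theorem MD.box1 {Γ : Set MF} {X Y : MF} (h : Prv AxS4 (X.imp Y)) (hX : MD Γ X.box) :
    MD Γ Y.box := .mp (.mp (.thm .axK) (.thm (.nec h))) hX

theorem MD.box2 {Γ : Set MF} {X Y Z : MF} (h : Prv AxS4 (X.imp (Y.imp Z))) (hX : MD Γ X.box)
    (hY : MD Γ Y.box) : MD Γ Z.box := .mp (.mp (.thm .axK) (MD.box1 h hX)) hY

theorem MD.unbox {Γ : Set MF} {X : MF} (h : MD Γ X.box) : MD Γ X :=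
  .mp (.thm (.extra (Or.inr ⟨X, rfl⟩))) h

theorem MD.four {Γ : Set MF} {X : MF} (h : MD Γ X.box) : MD Γ X.box.box :=
  .mp (.thm (.extra (Or.inl ⟨X, rfl⟩))) h

theorem MD.orE {Γ : Set MF} {X Y Z : MF} (h : MD Γ (X.or Y)) (h1 : MD Γ (X.imp Z))
    (h2 : MD Γ (Y.imp Z)) : MD Γ Z := by
  refine .mp (.mp (.mp (.thm (.taut ?_)) h) h1) h2
  rintro v ⟨h1, h2, h3, h4, h5⟩
  simp only [h4, h3]; cases v X <;> cases v Y <;> cases v Z <;> rfl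

theorem MD.andI {Γ : Set MF} {X Y : MF} (h1 : MD Γ X) (h2 : MD Γ Y) : MD Γ (X.and Y) := by
  refine .mp (.mp (.thm (.taut ?_)) h1) h2
  rintro v ⟨h1, h2, h3, h4, h5⟩
  simp only [h4, h2]; cases v X <;> cases v Y <;> rfl

theorem prv_and1 (X Y : MF) : Prv AxS4 ((X.and Y).imp X) := by
  refine .taut ?_
  rintro v ⟨h1, h2, h3, h4, h5⟩
  simp only [h4, h2]; cases v X <;> cases v Y <;> rfl

theorem prv_and2 (X Y : MF) : Prv AxS4 ((X.and Y).imp Y) := by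
  refine .taut ?_
  rintro v ⟨h1, h2, h3, h4, h5⟩
  simp only [h4, h2]; cases v X <;> cases v Y <;> rfl

theorem prv_andI (X Y : MF) : Prv AxS4 (X.imp (Y.imp (X.and Y))) := by
  refine .taut ?_
  rintro v ⟨h1, h2, h3, h4, h5⟩
  simp only [h4, h2]; cases v X <;> cases v Y <;> rfl

theorem prv_or1 (X Y : MF) : Prv AxS4 (X.imp (X.or Y)) := by
  refine .taut ?_
  rintro v ⟨h1, h2, h3, h4, h5⟩
  simp only [h4, h3]; cases v X <;> cases v Y <;> rfl

theorem prv_or2 (X Y : MF) : Prv AxS4 (Y.imp (X.or Y)) := by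
  refine .taut ?_
  rintro v ⟨h1, h2, h3, h4, h5⟩
  simp only [h4, h3]; cases v X <;> cases v Y <;> rfl

theorem prv_efq (X : MF) : Prv AxS4 (MF.bot.imp X) := by
  refine .taut ?_
  rintro v ⟨h1, h2, h3, h4, h5⟩
  simp only [h4, h1]; rfl

theorem MD.boxBhk (A : PF) : ∀ {Γ : Set MF}, MD Γ (bhk A) → MD Γ (bhk A).box := by
  induction A with
  | atom n => exact fun h => MD.four h
  | bot => exact fun h => MD.four h
  | and A B iA iB =>
    intro Γ h
    exact MD.box2 (prv_andI _ _) (iA (.mp (.thm (prv_and1 _ _)) h))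
      (iB (.mp (.thm (prv_and2 _ _)) h))
  | or A B iA iB =>
    intro Γ h
    refine MD.orE h (MD.ded ?_) (MD.ded ?_)
    · exact MD.box1 (prv_or1 _ _) (iA (.hyp (Set.mem_insert _ _)))
    · exact MD.box1 (prv_or2 _ _) (iB (.hyp (Set.mem_insert _ _)))
  | imp A B => exact fun h => MD.four h

theorem MD.boxI {Γ : Set PF} {X : MF} (h : MD (bhk '' Γ) X) : MD (bhk '' Γ) X.box := by
  induction h with
  | hyp hA =>
    obtain ⟨B, hB, rfl⟩ := hA
    exact MD.boxBhk B (.hyp ⟨B, hB, rfl⟩)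
  | thm hA => exact .thm (.nec hA)
  | mp _ _ i1 i2 => exact .mp (.mp (.thm .axK) i1) i2

theorem ipc_to_md {Γ : Set PF} {A : PF} (h : Deriv True RuleR Γ A) : MD (bhk '' Γ) (bhk A) := by
  induction h with
  | hyp h => exact .hyp ⟨_, h, rfl⟩
  | andI _ _ i1 i2 => exact MD.andI i1 i2
  | andE1 _ i => exact .mp (.thm (prv_and1 _ _)) i
  | andE2 _ i => exact .mp (.thm (prv_and2 _ _)) i
  | orI1 _ i => exact .mp (.thm (prv_or1 _ _)) i
  | orI2 _ i => exact .mp (.thm (prv_or2 _ _)) i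
  | orE _ _ _ i i1 i2 =>
    rw [Set.image_insert_eq] at i1 i2
    exact MD.orE i i1.ded i2.ded
  | impI _ i =>
    rw [Set.image_insert_eq] at i
    exact MD.boxI i.ded
  | exfalso _ _ i => exact .mp (.thm (prv_efq _)) (MD.unbox i)
  | @fAndI Γ A B C _ _ i1 i2 =>
    refine MD.box2 (.taut ?_) i1 i2
    rintro v ⟨h1, h2, h3, h4, h5⟩
    simp only [bhk, h4, h2]
    cases v (bhk A) <;> cases v (bhk B) <;> cases v (bhk C) <;> rfl
  | @fOrE Γ A B C _ _ i1 i2 =>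
    refine MD.box2 (.taut ?_) i1 i2
    rintro v ⟨h1, h2, h3, h4, h5⟩
    simp only [bhk, h4, h3]
    cases v (bhk A) <;> cases v (bhk B) <;> cases v (bhk C) <;> rfl
  | @fTr Γ A B C _ _ i1 i2 =>
    refine MD.box2 (.taut ?_) i1 i2
    rintro v ⟨h1, h2, h3, h4, h5⟩
    simp only [h4]
    cases v (bhk A) <;> cases v (bhk B) <;> cases v (bhk C) <;> rfl
  | extra hr _ i =>
    obtain ⟨A, B, rfl, rfl⟩ := hr
    exact .mp (MD.unbox (i (A.imp _) (List.mem_cons_of_mem _ (List.mem_singleton.2 rfl)))) (i A (by simp))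

/-! ### Soundness of S4 -/

theorem s4_sound {W : Type} {R : W → W → Prop} (hr : ∀ w, R w w)
    (ht : ∀ x y z, R x y → R y z → R x z) (V : ℕ → W → Prop) {A : MF} (h : Prv AxS4 A) :
    ∀ w, Forces R V w A := by
  induction h with
  | @taut A hA =>
    intro w
    classical
    have := hA (fun B => decide (Forces R V w B)) (by
      refine ⟨?_, ?_, ?_, ?_, ?_⟩
      · exact decide_eq_false (fun h => h)
      · intro A B
        by_cases h1 : Forces R V w A <;> by_cases h2 : Forces R V w B <;> simp [Forces, h1, h2]
      · intro A B
        by_cases h1 : Forces R V w A <;> by_cases h2 : Forces R V w B <;> simp [Forces, h1, h2]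
      · intro A B
        by_cases h1 : Forces R V w A <;> by_cases h2 : Forces R V w B <;> simp [Forces, h1, h2]
      · intro A
        by_cases h1 : Forces R V w A <;> simp [Forces, h1])
    simpa using this
  | axK =>
    intro w h1 h2 u hu
    exact h1 u hu (h2 u hu)
  | extra hA =>
    intro w
    rcases hA with ⟨B, rfl⟩ | ⟨B, rfl⟩
    · intro h u hu x hx
      exact h x (ht _ _ _ hu hx)
    · intro h
      exact h w (hr w)
  | mp _ _ i1 i2 => exact fun w => i1 w (i2 w)
  | nec _ i => exact fun w u _ => i u

theorem forces_conjL {W : Type} {R : W → W → Prop} {V : ℕ → W → Prop} {w : W} (l : List MF)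
    (h : ∀ B ∈ l, Forces R V w B) : Forces R V w (conjL l) := by
  induction l with
  | nil => exact fun h => h
  | cons a t ih =>
    exact ⟨h a (by simp), ih fun B hB => h B (by simp [hB])⟩

/-! ### Canonical model for IPC -/

theorem ipc_mono {Γ : Set PF} {A : PF} (h : Deriv True RuleR Γ A) :
    ∀ {Δ : Set PF}, Γ ⊆ Δ → Deriv True RuleR Δ A := by
  induction h with
  | hyp h => exact fun s => .hyp (s h)
  | andI _ _ i1 i2 => exact fun s => .andI (i1 s) (i2 s)
  | andE1 _ i => exact fun s => .andE1 (i s)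
  | andE2 _ i => exact fun s => .andE2 (i s)
  | orI1 _ i => exact fun s => .orI1 (i s)
  | orI2 _ i => exact fun s => .orI2 (i s)
  | orE _ _ _ i i1 i2 =>
    exact fun s => .orE (i s) (i1 (Set.insert_subset_insert s)) (i2 (Set.insert_subset_insert s))
  | impI _ i => exact fun s => .impI (i (Set.insert_subset_insert s))
  | exfalso h _ i => exact fun s => .exfalso h (i s)
  | fAndI _ _ i1 i2 => exact fun s => .fAndI (i1 s) (i2 s)
  | fOrE _ _ i1 i2 => exact fun s => .fOrE (i1 s) (i2 s)
  | fTr _ _ i1 i2 => exact fun s => .fTr (i1 s) (i2 s)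
  | extra hr _ i => exact fun s => .extra hr fun p hp => i p hp s

theorem ipc_mp {Γ : Set PF} {A B : PF} (h1 : Deriv True RuleR Γ (A.imp B))
    (h2 : Deriv True RuleR Γ A) : Deriv True RuleR Γ B := by
  refine .extra ⟨A, B, rfl, rfl⟩ ?_
  intro p hp
  simp only [List.mem_cons, List.not_mem_nil, or_false] at hp
  rcases hp with rfl | rfl
  · exact h2
  · exact h1

def FinD (Γ : Set PF) (A : PF) : Prop := ∃ s : Set PF, s.Finite ∧ s ⊆ Γ ∧ Deriv True RuleR s A

theorem FinD.one {Γ : Set PF} {A B : PF}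
    (h : ∀ s, Deriv True RuleR s A → Deriv True RuleR s B) (hA : FinD Γ A) : FinD Γ B := by
  obtain ⟨s, f, hs, d⟩ := hA
  exact ⟨s, f, hs, h s d⟩

theorem FinD.two {Γ : Set PF} {A B C : PF}
    (h : ∀ s, Deriv True RuleR s A → Deriv True RuleR s B → Deriv True RuleR s C)
    (hA : FinD Γ A) (hB : FinD Γ B) : FinD Γ C := by
  obtain ⟨s, f, hs, d⟩ := hA
  obtain ⟨t, g, ht, e⟩ := hB
  exact ⟨s ∪ t, f.union g, Set.union_subset hs ht,
    h _ (ipc_mono d Set.subset_union_left) (ipc_mono e Set.subset_union_right)⟩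

theorem FinD.ded {Γ : Set PF} {A B : PF} (h : FinD (insert A Γ) B) : FinD Γ (A.imp B) := by
  obtain ⟨s, f, hs, d⟩ := h
  refine ⟨s \ {A}, f.diff, ?_, .impI (ipc_mono d ?_)⟩
  · rintro x ⟨hx, hxA⟩
    rcases hs hx with h | h
    · exact absurd h hxA
    · exact h
  · intro x hx
    by_cases h : x = A
    · exact Or.inl h
    · exact Or.inr ⟨hx, h⟩

theorem ipc_compact {Γ : Set PF} {A : PF} (h : Deriv True RuleR Γ A) : FinD Γ A := by
  induction h with
  | @hyp Γ A h =>
    exact ⟨{A}, Set.finite_singleton A, by simpa using h, .hyp rfl⟩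
  | andI _ _ i1 i2 => exact FinD.two (fun s => .andI) i1 i2
  | andE1 _ i => exact FinD.one (fun s => .andE1) i
  | andE2 _ i => exact FinD.one (fun s => .andE2) i
  | orI1 _ i => exact FinD.one (fun s => .orI1) i
  | orI2 _ i => exact FinD.one (fun s => .orI2) i
  | orE _ _ _ i i1 i2 =>
    exact FinD.two (fun s => ipc_mp) (FinD.two (fun s => .fOrE) i1.ded i2.ded) i
  | impI _ i => exact i.ded
  | exfalso h _ i => exact FinD.one (fun s => .exfalso h) i
  | fAndI _ _ i1 i2 => exact FinD.two (fun s => .fAndI) i1 i2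
  | fOrE _ _ i1 i2 => exact FinD.two (fun s => .fOrE) i1 i2
  | fTr _ _ i1 i2 => exact FinD.two (fun s => .fTr) i1 i2
  | extra hr _ i =>
    obtain ⟨A, B, rfl, rfl⟩ := hr
    exact FinD.two (fun s => ipc_mp) (i (A.imp _) (List.mem_cons_of_mem _ (List.mem_singleton.2 rfl))) (i A (by simp))

structure PrimeTh (M : Set PF) : Prop where
  closed : ∀ B, Deriv True RuleR M B → B ∈ M
  cons : PF.bot ∉ M
  prime : ∀ B C, PF.or B C ∈ M → B ∈ M ∨ C ∈ M

theorem lindenbaum {Γ : Set PF} {A : PF} (h : ¬ Deriv True RuleR Γ A) :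
    ∃ M, PrimeTh M ∧ Γ ⊆ M ∧ A ∉ M := by
  obtain ⟨M, hΓ, hM⟩ := zorn_subset_nonempty {S : Set PF | ¬ Deriv True RuleR S A} (by
    intro c hc hch hne
    refine ⟨⋃₀ c, ?_, fun s hs => Set.subset_sUnion_of_mem hs⟩
    intro hd
    obtain ⟨s, hf, hs, d⟩ := ipc_compact hd
    obtain ⟨t, ht, hst⟩ := DirectedOn.exists_mem_subset_of_finite_of_subset_sUnion hne
      hch.directedOn hf hs
    exact hc ht (ipc_mono d hst)) Γ h
  have hnA : ¬ Deriv True RuleR M A := hM.prop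
  have key : ∀ B, B ∉ M → Deriv True RuleR (insert B M) A := by
    intro B hB
    by_contra hcon
    exact hB (hM.le_of_ge (y := insert B M) hcon (Set.subset_insert _ _) (Set.mem_insert _ _))
  refine ⟨M, ⟨?_, ?_, ?_⟩, hΓ, fun hA => hnA (.hyp hA)⟩
  · intro B hB
    by_contra hBM
    exact hnA (ipc_mp (.impI (key B hBM)) hB)
  · intro hb
    exact hnA (.exfalso trivial (.hyp hb))
  · intro B C hBC
    by_contra hcon
    push Not at hcon
    exact hnA (.orE (.hyp hBC) (key B hcon.1) (key C hcon.2))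

def CW : Type := {M : Set PF // PrimeTh M}
def cR (M N : CW) : Prop := M.1 ⊆ N.1
def cV (n : ℕ) (M : CW) : Prop := PF.atom n ∈ M.1

theorem truth (A : PF) : ∀ M : CW, Forces cR cV M (bhk A) ↔ A ∈ M.1 := by
  induction A with
  | atom n =>
    intro M
    exact ⟨fun h => h M (fun x hx => hx), fun h u hu => hu h⟩
  | bot =>
    intro M
    exact ⟨fun h => (h M (fun x hx => hx)).elim, fun h => (M.2.cons h).elim⟩
  | and A B iA iB =>
    intro M
    constructor
    · rintro ⟨h1, h2⟩
      exact M.2.closed _ (.andI (.hyp ((iA M).1 h1)) (.hyp ((iB M).1 h2)))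
    · intro h
      exact ⟨(iA M).2 (M.2.closed _ (.andE1 (.hyp h))), (iB M).2 (M.2.closed _ (.andE2 (.hyp h)))⟩
  | or A B iA iB =>
    intro M
    constructor
    · rintro (h | h)
      · exact M.2.closed _ (.orI1 (.hyp ((iA M).1 h)))
      · exact M.2.closed _ (.orI2 (.hyp ((iB M).1 h)))
    · intro h
      rcases M.2.prime _ _ h with h | h
      · exact Or.inl ((iA M).2 h)
      · exact Or.inr ((iB M).2 h)
  | imp A B iA iB =>
    intro M
    constructor
    · intro h
      refine M.2.closed _ (.impI ?_)
      by_contra hcon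
      obtain ⟨N, hN, hs, hB⟩ := lindenbaum hcon
      have h1 := h ⟨N, hN⟩ (fun x hx => hs (Set.mem_insert_of_mem _ hx))
      exact hB ((iB ⟨N, hN⟩).1 (h1 ((iA ⟨N, hN⟩).2 (hs (Set.mem_insert _ _)))))
    · intro h N hMN hA
      exact (iB N).2 (N.2.closed _ (ipc_mp (.hyp (hMN h)) (.hyp ((iA N).1 hA))))

-- STATEMENT 5
theorem stmt5 (Γ : Set PF) (A : PF) :
    IPC Γ A ↔ ModalConseq AxS4 (bhk '' Γ) (bhk A) := by
  constructor
  · intro h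
    exact (ipc_to_md h).toConseq
  · rintro ⟨l, hl, hp⟩
    by_contra hcon
    obtain ⟨M, hM, hs, hA⟩ := lindenbaum hcon
    apply hA
    refine (truth A ⟨M, hM⟩).1 (s4_sound (R := cR) (fun w x hx => hx)
      (fun x y z h1 h2 a ha => h2 (h1 ha)) cV hp ⟨M, hM⟩ (forces_conjL l ?_))
    intro B hB
    obtain ⟨C, hC, rfl⟩ := hl B hB
    exact (truth C ⟨M, hM⟩).2 (hs hC)
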